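/- arXiv:2209.13576 — 2 statements merged into one kernel-verified Lean document; each statement's English description precedes it below -/
import Mathlib

section
/- Let X be a complex Banach space, let A be a closed linear operator in X, and let R : (0,∞) → L(X) be strongly continuous with ∫₀^∞ ‖R(t)‖ dt < ∞ and such that for every t > 0 and x ∈ D(A): R(t)x ∈ D(A) and A R(t)x = R(t)Ax. Let ∅ ≠ Λ' ⊆ ℝ, and let f : ℝ → X be bounded and continuous with f(s) ∈ D(A) for all s and with Af bounded. Suppose that for every ε > 0 and every compact set K ⊆ ℝ there exists l > 0 such that for each t₀ ∈ Λ' there is τ ∈ [t₀ − l, t₀ + l] ∩ Λ' with sup_{t∈K} ‖f(t+τ) − Af(t)‖ ≤ ε. Then F(t) := ∫_{−∞}^t R(t−s) f(s) ds is bounded and continuous, F(t) ∈ D(A) for all t, and F has the same property: for every ε > 0 and every compact K ⊆ ℝ there exists l > 0 such that for each t₀ ∈ Λ' there is τ ∈ [t₀ − l, t₀ + l] ∩ Λ' with sup_{t∈K} ‖F(t+τ) − AF(t)‖ ≤ ε. -/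
open MeasureTheory Filter Topology

/-!
On functions bounded by a fixed constant, `u ↦ ∫ R s (u (t - s)) ∂μ` is continuous for uniform
convergence on compact sets: as `∫ ‖R‖ ∂μ` is finite, the part of the integral outside a large ball
`B` is negligible, and for `t` in a compact set `K` the rest only sees `u` on the compact set of
differences `K - B`. Since this map commutes with translations, a translation number `τ` good for
`(f, A f)` on the compact set `K - B` is good for the convolutions on `K`. The operator `A` passes
under the integral because its graph is a closed subspace. The function `A f` is a locally uniform
limit of translates of `f`, so it inherits continuity and boundedness from `f`.
-/

open Metric

section Integration

theorem tendsto_setIntegral_compl_closedBall {G E : Type*} [PseudoMetricSpace G]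
    [MeasurableSpace G] [OpensMeasurableSpace G] {μ : Measure G} [NormedAddCommGroup E]
    [NormedSpace ℝ E] {φ : G → E} (hφ : Integrable φ μ) (x : G) :
    Tendsto (fun r : ℝ => ∫ s in (closedBall x r)ᶜ, φ s ∂μ) atTop (𝓝 0) := by
  have h := ((aecover_closedBall (x := x) tendsto_id).integral_tendsto_of_countably_generated
    hφ).const_sub (∫ s, φ s ∂μ)
  simpa only [id, sub_self, setIntegral_compl measurableSet_closedBall hφ] using h

variable {α : Type*} [MeasurableSpace α] {μ : Measure α}

theorem aestronglyMeasurable_clm_apply {𝕜 E F : Type*} [NontriviallyNormedField 𝕜]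
    [NormedAddCommGroup E] [NormedSpace 𝕜 E] [NormedAddCommGroup F] [NormedSpace 𝕜 F]
    {R : α → E →L[𝕜] F} (hR : ∀ x, AEStronglyMeasurable (fun s => R s x) μ) {u : α → E}
    (hu : AEStronglyMeasurable u μ) : AEStronglyMeasurable (fun s => R s (u s)) μ := by
  have of_simpleFunc (v : SimpleFunc α E) : AEStronglyMeasurable (fun s => R s (v s)) μ := by
    induction v using SimpleFunc.induction with
    | @const c T hs =>
      refine ((hR c).indicator hs).congr (ae_of_all _ fun s => ?_)
      by_cases h : s ∈ T <;> simp [h]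
    | add _ hv hw => simpa only [SimpleFunc.coe_add, Pi.add_apply, map_add] using hv.fun_add hw
  have of_stronglyMeasurable {v : α → E} (hv : StronglyMeasurable v) :
      AEStronglyMeasurable (fun s => R s (v s)) μ :=
    aestronglyMeasurable_of_tendsto_ae atTop (fun n => of_simpleFunc (hv.approx n))
      (ae_of_all _ fun s => ((R s).continuous.tendsto _).comp (hv.tendsto_approx s))
  refine (of_stronglyMeasurable hu.stronglyMeasurable_mk).congr ?_
  filter_upwards [hu.ae_eq_mk] with s hs
  rw [hs]

theorem integral_mem_of_isClosed_submodule {E : Type*} [NormedAddCommGroup E] [NormedSpace ℝ E]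
    [CompleteSpace E] {S : Submodule ℝ E} (hS : IsClosed (S : Set E)) {u : α → E}
    (hu : Integrable u μ) (huS : ∀ᵐ a ∂μ, u a ∈ S) : ∫ a, u a ∂μ ∈ S := by
  have mkQL_eq_zero (x : E) : S.mkQL x = 0 ↔ x ∈ S := Submodule.Quotient.mk_eq_zero S
  rw [← mkQL_eq_zero, ← S.mkQL.integral_comp_comm hu]
  exact integral_eq_zero_of_ae (huS.mono fun a ha => (mkQL_eq_zero _).2 ha)

variable {X Y : Type*} [NormedAddCommGroup X] [NormedSpace ℝ X] [NormedAddCommGroup Y]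
  [NormedSpace ℝ Y] {R : α → X →L[ℝ] Y}

theorem norm_integral_clm_apply_le (hR : Integrable (fun s => ‖R s‖) μ) {u : α → X} {T : Set α}
    (hT : MeasurableSet T) {δ C : ℝ} (hδ : ∀ s ∈ T, ‖u s‖ ≤ δ) (hC : ∀ s, ‖u s‖ ≤ C) :
    ‖∫ s, R s (u s) ∂μ‖ ≤ (∫ s in T, ‖R s‖ ∂μ) * δ + (∫ s in Tᶜ, ‖R s‖ ∂μ) * C := by
  classical
  have hIδ := hR.mul_const δ
  have hIC := hR.mul_const C
  calc ‖∫ s, R s (u s) ∂μ‖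
      ≤ ∫ s, T.piecewise (fun s => ‖R s‖ * δ) (fun s => ‖R s‖ * C) s ∂μ := by
        refine norm_integral_le_of_norm_le
          (.piecewise hT hIδ.integrableOn hIC.integrableOn) (ae_of_all _ fun s => ?_)
        by_cases hs : s ∈ T
        · simpa only [Set.piecewise_eq_of_mem _ _ _ hs] using (R s).le_opNorm_of_le (hδ s hs)
        · simpa only [Set.piecewise_eq_of_notMem _ _ _ hs] using (R s).le_opNorm_of_le (hC s)
    _ = (∫ s in T, ‖R s‖ ∂μ) * δ + (∫ s in Tᶜ, ‖R s‖ ∂μ) * C := by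
        rw [integral_piecewise hT hIδ.integrableOn hIC.integrableOn, integral_mul_const,
          integral_mul_const]

end Integration

section StrongConvolution

variable {G X Y : Type*} [MeasurableSpace G] [NormedAddCommGroup X] [NormedSpace ℝ X]
  [NormedAddCommGroup Y] [NormedSpace ℝ Y]

/-- The convolution of an operator-valued kernel `R` with a vector-valued function `u`. When `μ` is
Lebesgue measure on `(0, ∞)`, the substitution `s ↦ t - s` turns it into the infinite convolution
product `∫_{-∞}^t R (t - s) (u s) ds`. It is not phrased through `MeasureTheory.convolution`, whose
theory asks for `R` to be measurable in operator norm rather than strongly. -/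
noncomputable def strongConvolution [Sub G] (μ : Measure G) (R : G → X →L[ℝ] Y) (u : G → X)
    (t : G) : Y :=
  ∫ s, R s (u (t - s)) ∂μ

theorem norm_strongConvolution_le [Sub G] {μ : Measure G} {R : G → X →L[ℝ] Y}
    (hRint : Integrable (fun s => ‖R s‖) μ) {u : G → X} {C : ℝ} (hC : ∀ s, ‖u s‖ ≤ C) (t : G) :
    ‖strongConvolution μ R u t‖ ≤ (∫ s, ‖R s‖ ∂μ) * C := by
  simpa [strongConvolution] using norm_integral_clm_apply_le hRint MeasurableSet.univ
    (fun s _ => hC (t - s)) fun s => hC (t - s)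

theorem strongConvolution_comp_add_right [AddCommGroup G] (μ : Measure G) (R : G → X →L[ℝ] Y)
    (u : G → X) (τ t : G) :
    strongConvolution μ R (fun s => u (s + τ)) t = strongConvolution μ R u (t + τ) := by
  simp only [strongConvolution, sub_add_eq_add_sub]

variable [NormedAddCommGroup G] [ProperSpace G] [OpensMeasurableSpace G] {μ : Measure G}
  {R : G → X →L[ℝ] Y} {u v : G → X} {C : ℝ}

theorem integrable_strongConvolution_integrand
    (hR : ∀ x, AEStronglyMeasurable (fun s => R s x) μ) (hRint : Integrable (fun s => ‖R s‖) μ)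
    (hu : Continuous u) (hC : ∀ s, ‖u s‖ ≤ C) (t : G) :
    Integrable (fun s => R s (u (t - s))) μ :=
  have hut : Continuous fun s => u (t - s) := by fun_prop
  (hRint.mul_const C).mono' (aestronglyMeasurable_clm_apply hR hut.aestronglyMeasurable)
    (ae_of_all _ fun s => (R s).le_opNorm_of_le (hC (t - s)))

theorem continuous_strongConvolution
    (hR : ∀ x, AEStronglyMeasurable (fun s => R s x) μ) (hRint : Integrable (fun s => ‖R s‖) μ)
    (hu : Continuous u) (hC : ∀ s, ‖u s‖ ≤ C) : Continuous (strongConvolution μ R u) :=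
  continuous_of_dominated
    (fun t => (integrable_strongConvolution_integrand hR hRint hu hC t).aestronglyMeasurable)
    (fun t => ae_of_all _ fun s => (R s).le_opNorm_of_le (hC (t - s)))
    (hRint.mul_const C) (ae_of_all _ fun s => by fun_prop)

theorem strongConvolution_sub
    (hR : ∀ x, AEStronglyMeasurable (fun s => R s x) μ) (hRint : Integrable (fun s => ‖R s‖) μ)
    {D : ℝ} (hu : Continuous u) (huC : ∀ s, ‖u s‖ ≤ C) (hv : Continuous v) (hvD : ∀ s, ‖v s‖ ≤ D) :
    strongConvolution μ R (u - v) = strongConvolution μ R u - strongConvolution μ R v := by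
  funext t
  simp only [strongConvolution, Pi.sub_apply, map_sub]
  exact integral_sub (integrable_strongConvolution_integrand hR hRint hu huC t)
    (integrable_strongConvolution_integrand hR hRint hv hvD t)

theorem prodMk_strongConvolution_mem [CompleteSpace X] {R : G → X →L[ℝ] X}
    (hR : ∀ x, AEStronglyMeasurable (fun s => R s x) μ) (hRint : Integrable (fun s => ‖R s‖) μ)
    {S : Submodule ℝ (X × X)} (hS : IsClosed (S : Set (X × X)))
    (hRS : ∀ᵐ s ∂μ, ∀ x y, (x, y) ∈ S → (R s x, R s y) ∈ S)
    {D : ℝ} (hu : Continuous u) (huC : ∀ s, ‖u s‖ ≤ C) (hv : Continuous v) (hvD : ∀ s, ‖v s‖ ≤ D)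
    (huv : ∀ s, (u s, v s) ∈ S) (t : G) :
    (strongConvolution μ R u t, strongConvolution μ R v t) ∈ S := by
  have hIu := integrable_strongConvolution_integrand hR hRint hu huC t
  have hIv := integrable_strongConvolution_integrand hR hRint hv hvD t
  rw [strongConvolution, strongConvolution, ← integral_pair hIu hIv]
  exact integral_mem_of_isClosed_submodule hS (hIu.prodMk hIv)
    (hRS.mono fun s hs => hs _ _ (huv (t - s)))

theorem exists_isCompact_forall_norm_strongConvolution_le
    (hRint : Integrable (fun s => ‖R s‖) μ) (C : ℝ) {ε : ℝ} (hε : 0 < ε) {K : Set G}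
    (hK : IsCompact K) :
    ∃ δ > 0, ∃ K' : Set G, IsCompact K' ∧ ∀ u : G → X, (∀ s, ‖u s‖ ≤ C) →
      (∀ s ∈ K', ‖u s‖ ≤ δ) → ∀ t ∈ K, ‖strongConvolution μ R u t‖ ≤ ε := by
  obtain ⟨r, hr⟩ : ∃ r : ℝ, (∫ s in (closedBall 0 r)ᶜ, ‖R s‖ ∂μ) * C < ε / 2 :=
    (((tendsto_setIntegral_compl_closedBall hRint 0).mul_const C).eventually_lt_const
      (by simpa using half_pos hε)).exists
  set M := ∫ s in closedBall 0 r, ‖R s‖ ∂μ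
  have hM : 0 ≤ M := integral_nonneg fun s => norm_nonneg _
  have hM_pos : 0 < 2 * (M + 1) := by linarith
  have hMδ : M * (ε / (2 * (M + 1))) ≤ ε / 2 := by
    rw [mul_div_assoc', div_le_div_iff₀ hM_pos two_pos]
    linarith
  refine ⟨ε / (2 * (M + 1)), div_pos hε hM_pos, (fun p : G × G => p.1 - p.2) '' K ×ˢ closedBall 0 r,
    (hK.prod (isCompact_closedBall 0 r)).image continuous_sub, fun u huC huδ t ht => ?_⟩
  have hsplit := norm_integral_clm_apply_le hRint (u := fun s => u (t - s))
    measurableSet_closedBall (fun s hs => huδ (t - s) ⟨(t, s), ⟨ht, hs⟩, rfl⟩)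
    fun s => huC (t - s)
  exact hsplit.trans (by linarith)

end StrongConvolution

section Levitan

variable {G X : Type*} [NormedAddCommGroup G] [NormedAddCommGroup X] {Λ : Set G} {f g : G → X}

/-- On every compact set, `g` is approximated by translates `f (· + τ)` whose translation numbers
`τ ∈ Λ` are relatively dense in `Λ`. For `g = A ∘ f` with a linear operator `A`, this is the
Levitan-type almost periodicity of `f` relative to `A` and `Λ`. -/
def IsLevitanTranslateLimit (Λ : Set G) (f g : G → X) : Prop :=
  ∀ ε > (0 : ℝ), ∀ K : Set G, IsCompact K → ∃ l > (0 : ℝ), ∀ t₀ ∈ Λ,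
    ∃ τ ∈ closedBall t₀ l ∩ Λ, ∀ t ∈ K, ‖f (t + τ) - g t‖ ≤ ε

namespace IsLevitanTranslateLimit

theorem exists_translate (h : IsLevitanTranslateLimit Λ f g) (hΛ : Λ.Nonempty) {ε : ℝ}
    (hε : 0 < ε) {K : Set G} (hK : IsCompact K) : ∃ τ, ∀ t ∈ K, ‖f (t + τ) - g t‖ ≤ ε := by
  obtain ⟨l, -, hl⟩ := h ε hε K hK
  obtain ⟨t₀, ht₀⟩ := hΛ
  obtain ⟨τ, -, hτ⟩ := hl t₀ ht₀
  exact ⟨τ, hτ⟩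

theorem norm_le (h : IsLevitanTranslateLimit Λ f g) (hΛ : Λ.Nonempty) {C : ℝ}
    (hC : ∀ s, ‖f s‖ ≤ C) (t : G) : ‖g t‖ ≤ C := by
  refine le_of_forall_pos_le_add fun ε hε => ?_
  obtain ⟨τ, hτ⟩ := h.exists_translate hΛ hε isCompact_singleton
  calc ‖g t‖ ≤ ‖f (t + τ)‖ + ‖f (t + τ) - g t‖ := norm_le_norm_add_norm_sub _ _
    _ ≤ C + ε := add_le_add (hC _) (hτ t rfl)

variable [ProperSpace G]

theorem continuous (h : IsLevitanTranslateLimit Λ f g) (hΛ : Λ.Nonempty) (hf : Continuous f) :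
    Continuous g := by
  refine continuous_iff_continuousAt.2 fun x =>
    continuousAt_of_locally_uniform_approx_of_continuousAt fun V hV => ?_
  obtain ⟨ε, hε, hεV⟩ := mem_uniformity_dist.1 hV
  obtain ⟨τ, hτ⟩ := h.exists_translate hΛ (half_pos hε) (isCompact_closedBall x 1)
  refine ⟨closedBall x 1, closedBall_mem_nhds x one_pos, fun t => f (t + τ), by fun_prop,
    fun t ht => hεV ?_⟩
  rw [dist_comm, dist_eq_norm]
  exact (hτ t ht).trans_lt (half_lt_self hε)

theorem strongConvolution {Y : Type*} [MeasurableSpace G] [OpensMeasurableSpace G]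
    [NormedSpace ℝ X] [NormedAddCommGroup Y] [NormedSpace ℝ Y] {μ : Measure G}
    {R : G → X →L[ℝ] Y} (hR : ∀ x, AEStronglyMeasurable (fun s => R s x) μ)
    (hRint : Integrable (fun s => ‖R s‖) μ) (h : IsLevitanTranslateLimit Λ f g)
    (hf : Continuous f) (hg : Continuous g) {C D : ℝ} (hfC : ∀ s, ‖f s‖ ≤ C)
    (hgD : ∀ s, ‖g s‖ ≤ D) :
    IsLevitanTranslateLimit Λ (strongConvolution μ R f) (strongConvolution μ R g) := by
  intro ε hε K hK
  obtain ⟨δ, hδ, K', hK', hsmall⟩ :=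
    exists_isCompact_forall_norm_strongConvolution_le hRint (C + D) hε hK
  obtain ⟨l, hl, htranslate⟩ := h δ hδ K' hK'
  refine ⟨l, hl, fun t₀ ht₀ => ?_⟩
  obtain ⟨τ, hτmem, hτ⟩ := htranslate t₀ ht₀
  refine ⟨τ, hτmem, fun t ht => ?_⟩
  have hdiff : ∀ s, ‖((fun s => f (s + τ)) - g) s‖ ≤ C + D := fun s =>
    (norm_sub_le _ _).trans (add_le_add (hfC _) (hgD _))
  have hconv := hsmall _ hdiff hτ t ht
  rwa [strongConvolution_sub hR hRint (by fun_prop) (fun s => hfC (s + τ)) hg hgD, Pi.sub_apply,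
    strongConvolution_comp_add_right] at hconv

end IsLevitanTranslateLimit

end Levitan

theorem stmt5_general {G X : Type*} [NormedAddCommGroup G] [ProperSpace G] [MeasurableSpace G]
    [OpensMeasurableSpace G] [NormedAddCommGroup X] [NormedSpace ℝ X] [CompleteSpace X]
    {μ : Measure G} {S : Submodule ℝ (X × X)} (hS : IsClosed (S : Set (X × X)))
    {R : G → X →L[ℝ] X} (hR : ∀ x, AEStronglyMeasurable (fun s => R s x) μ)
    (hRint : Integrable (fun s => ‖R s‖) μ)
    (hRS : ∀ᵐ s ∂μ, ∀ x y, (x, y) ∈ S → (R s x, R s y) ∈ S)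
    {Λ : Set G} (hΛ : Λ.Nonempty) {f g : G → X} (hf : Continuous f) (hfb : ∃ C, ∀ s, ‖f s‖ ≤ C)
    (hfg : ∀ s, (f s, g s) ∈ S) (hlev : IsLevitanTranslateLimit Λ f g) :
    (∀ t, Integrable (fun s => R s (f (t - s))) μ) ∧
    Continuous (strongConvolution μ R f) ∧
    (∃ C, ∀ t, ‖strongConvolution μ R f t‖ ≤ C) ∧
    (∀ t, (strongConvolution μ R f t, strongConvolution μ R g t) ∈ S) ∧
    IsLevitanTranslateLimit Λ (strongConvolution μ R f) (strongConvolution μ R g) := by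
  obtain ⟨C, hC⟩ := hfb
  have hg : Continuous g := hlev.continuous hΛ hf
  have hgC : ∀ s, ‖g s‖ ≤ C := hlev.norm_le hΛ hC
  exact ⟨integrable_strongConvolution_integrand hR hRint hf hC,
    continuous_strongConvolution hR hRint hf hC,
    ⟨_, norm_strongConvolution_le hRint hC⟩,
    prodMk_strongConvolution_mem hR hRint hS hRS hf hC hg hgC hfg,
    hlev.strongConvolution hR hRint hf hg hC hgC⟩

/-- Invariance of Levitan-type metrical almost periodicity (with respect to the binary
relation given by a closed linear operator `A` and a set `Λ'` of admissible almost
periods) under the infinite convolution product `F(t) = ∫_{-∞}^t R(t−s) f(s) ds`. -/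
theorem stmt5 {X : Type*} [NormedAddCommGroup X] [NormedSpace ℂ X] [CompleteSpace X]
    (A : X →ₗ.[ℂ] X) (hA : IsClosed (A.graph : Set (X × X)))
    (R : ℝ → X →L[ℂ] X)
    (hRsc : ∀ x : X, ContinuousOn (fun t => R t x) (Set.Ioi 0))
    (hRint : IntegrableOn (fun t => ‖R t‖) (Set.Ioi 0))
    (hRA : ∀ t ∈ Set.Ioi (0 : ℝ), ∀ x y : X, (x, y) ∈ A.graph → (R t x, R t y) ∈ A.graph)
    (Λ' : Set ℝ) (hΛ' : Λ'.Nonempty)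
    (f Af : ℝ → X) (hfc : Continuous f) (hfb : ∃ C, ∀ s, ‖f s‖ ≤ C)
    (hgraph : ∀ s, (f s, Af s) ∈ A.graph) (hAfb : ∃ C, ∀ s, ‖Af s‖ ≤ C)
    (hlev : ∀ ε > (0 : ℝ), ∀ K : Set ℝ, IsCompact K → ∃ l > (0 : ℝ), ∀ t₀ ∈ Λ',
      ∃ τ ∈ Set.Icc (t₀ - l) (t₀ + l) ∩ Λ', ∀ t ∈ K, ‖f (t + τ) - Af t‖ ≤ ε) :
    (∀ t : ℝ, IntegrableOn (fun s => R s (f (t - s))) (Set.Ioi 0)) ∧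
    Continuous (fun t => ∫ s in Set.Ioi (0 : ℝ), R s (f (t - s))) ∧
    (∃ C, ∀ t, ‖∫ s in Set.Ioi (0 : ℝ), R s (f (t - s))‖ ≤ C) ∧
    (∀ t : ℝ, ((∫ s in Set.Ioi (0 : ℝ), R s (f (t - s))),
        ∫ s in Set.Ioi (0 : ℝ), R s (Af (t - s))) ∈ A.graph) ∧
    (∀ ε > (0 : ℝ), ∀ K : Set ℝ, IsCompact K → ∃ l > (0 : ℝ), ∀ t₀ ∈ Λ',
      ∃ τ ∈ Set.Icc (t₀ - l) (t₀ + l) ∩ Λ', ∀ t ∈ K,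
        ‖(∫ s in Set.Ioi (0 : ℝ), R s (f (t + τ - s))) -
          ∫ s in Set.Ioi (0 : ℝ), R s (Af (t - s))‖ ≤ ε) := by
  simp only [← Real.closedBall_eq_Icc] at hlev ⊢
  exact stmt5_general (S := A.graph.restrictScalars ℝ) (R := fun t => (R t).restrictScalars ℝ) hA
    (fun x => (hRsc x).aestronglyMeasurable measurableSet_Ioi) (by simpa [IntegrableOn] using hRint)
    (ae_restrict_of_forall_mem measurableSet_Ioi hRA) hΛ' hfc hfb hgraph hlev
end

section
/- Let X be a complex Banach space and F : ℝⁿ → X continuous. Then F is Levitan N-almost periodic of type 1 if and only if F is strongly Levitan N-almost periodic. -/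
open Real Filter Topology

/-- A set `E ⊆ ℝⁿ` is relatively dense if there is `l > 0` such that every closed
ball of radius `l` meets `E`. -/
def RelativelyDense {n : ℕ} (E : Set (EuclideanSpace ℝ (Fin n))) : Prop :=
  ∃ l > (0 : ℝ), ∀ x : EuclideanSpace ℝ (Fin n), ∃ τ ∈ E, ‖τ - x‖ ≤ l

/-- A set `E ⊆ ℝ` is relatively dense if there is `l > 0` such that every closed
interval of length `2l` meets `E`. -/
def RelativelyDenseR (E : Set ℝ) : Prop :=
  ∃ l > (0 : ℝ), ∀ x : ℝ, ∃ e ∈ E, |e - x| ≤ l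

/-- The set `E(ε, N)` of all `(ε, N)`-almost periods of `F`. -/
def AlmostPeriodSet {n : ℕ} {X : Type*} [NormedAddCommGroup X]
    (F : EuclideanSpace ℝ (Fin n) → X) (ε N : ℝ) : Set (EuclideanSpace ℝ (Fin n)) :=
  {τ | ∀ t, ‖t‖ ≤ N → ‖F (t + τ) - F t‖ ≤ ε}

/-- `F` is Levitan pre-almost periodic: `E(ε, N)` is relatively dense for all `ε, N > 0`. -/
def LevitanPreAP {n : ℕ} {X : Type*} [NormedAddCommGroup X]
    (F : EuclideanSpace ℝ (Fin n) → X) : Prop :=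
  ∀ ε > (0 : ℝ), ∀ N > (0 : ℝ), RelativelyDense (AlmostPeriodSet F ε N)

/-- `F` is strongly Levitan `N`-almost periodic: it is Levitan pre-almost periodic and,
for every `N, ε > 0`, there exist `η > 0` and relatively dense sets `E¹, …, Eⁿ ⊆ ℝ`
whose product consists of `(η, N)`-almost periods of `F` and satisfies
`E ± E ⊆ E(ε, N)`. -/
def StronglyLevitanNAP {n : ℕ} {X : Type*} [NormedAddCommGroup X]
    (F : EuclideanSpace ℝ (Fin n) → X) : Prop :=
  LevitanPreAP F ∧
    ∀ N > (0 : ℝ), ∀ ε > (0 : ℝ), ∃ η > (0 : ℝ), ∃ E : Fin n → Set ℝ,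
      (∀ j, RelativelyDenseR (E j)) ∧
      (∀ τ : EuclideanSpace ℝ (Fin n), (∀ j, τ j ∈ E j) → τ ∈ AlmostPeriodSet F η N) ∧
      (∀ a b : EuclideanSpace ℝ (Fin n), (∀ j, a j ∈ E j) → (∀ j, b j ∈ E j) →
        a + b ∈ AlmostPeriodSet F ε N ∧ a - b ∈ AlmostPeriodSet F ε N)

/-- `F` is Levitan `N`-almost periodic of type `1` (Marchenko): for each `j` there is a
real sequence `(λ^j_l)` such that, for every `N, ε > 0`, there exist `k ∈ ℕ` and `δ > 0`
such that every `τ ∈ ℝⁿ` with `dist(λ^j_l τ_j, 2πℤ) ≤ δ` for all `l < k`, `j`, is an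
`(ε, N)`-almost period of `F`. -/
def LevitanType1 {n : ℕ} {X : Type*} [NormedAddCommGroup X]
    (F : EuclideanSpace ℝ (Fin n) → X) : Prop :=
  ∃ lam : Fin n → ℕ → ℝ, ∀ N > (0 : ℝ), ∀ ε > (0 : ℝ), ∃ k : ℕ, ∃ δ > (0 : ℝ),
    ∀ τ : EuclideanSpace ℝ (Fin n),
      (∀ l < k, ∀ j : Fin n, ∃ m : ℤ, |lam j l * τ j - 2 * Real.pi * m| ≤ δ) →
      τ ∈ AlmostPeriodSet F ε N

/-!
Type 1 says that each `E(ε, N)` is a neighbourhood of `0` for the Bohr topology. Such neighbourhoods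
are relatively dense, since the Bohr compactification is compact, and contain `W ± W` for a smaller
neighbourhood `W`; this gives strong almost periodicity.

Conversely, give `ℝⁿ` the translation invariant topology in which the sets `E(ε, N) ∩ -E(ε, N)` form
a basis of neighbourhoods of `0`. A priori addition is only separately continuous. But let `E` be
relatively dense with `E - E ⊆ U`, where `U` is closed. After thickening `E` slightly, finitely many
of its translates cover `ℝⁿ`, so the closure of `E` has an interior point `x`, and
`u + v = (x + u) - (x - v) ∈ U` for all small `u` and `v`: addition is jointly continuous.

Now Bogolyubov's theorem says that `A - A + A - A` contains a Bohr neighbourhood of `0`, up to a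
small error, if `A ⊆ ℝ` is relatively dense. Since `ℝⁿ` has become a topological group, each
coordinate axis therefore maps continuously into it from the Bohr topology, and so does their
product.
-/

section Bogolyubov

open scoped Pointwise

variable {G : Type*} [AddCommGroup G] [Finite G]

theorem sq_norm_sum_addChar_eq (A : Finset G) (ψ : AddChar G ℂ) :
    ((‖∑ a ∈ A, ψ a‖ ^ 2 : ℝ) : ℂ) = ∑ p ∈ A ×ˢ A, ψ (p.1 - p.2) := by
  rw [Complex.ofReal_pow, ← Complex.mul_conj', map_sum, Finset.sum_mul_sum, Finset.sum_product]
  simp_rw [← AddChar.map_neg_eq_conj, ← AddChar.map_add_eq_mul, sub_eq_add_neg]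

theorem sum_sq_norm_sum_addChar (A : Finset G) :
    ∑ ψ : AddChar G ℂ, ‖∑ a ∈ A, ψ a‖ ^ 2 = Nat.card G * A.card := by
  classical
  have := Fintype.ofFinite G
  rw [← Complex.ofReal_inj, Complex.ofReal_sum]
  simp_rw [sq_norm_sum_addChar_eq]
  rw [Finset.sum_comm, Finset.sum_product]
  simp [AddChar.sum_apply_eq_ite, sub_eq_zero, mul_comm, Nat.card_eq_fintype_card]

theorem sum_pow_four_norm_sum_addChar_mul_re_eq_zero [DecidableEq G] {A : Finset G} {x : G}
    (hx : x ∉ A - A + (A - A)) :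
    ∑ ψ : AddChar G ℂ, ‖∑ a ∈ A, ψ a‖ ^ 4 * (ψ x).re = 0 := by
  have hterm (ψ : AddChar G ℂ) : ((‖∑ a ∈ A, ψ a‖ ^ 4 : ℝ) : ℂ) * ψ x =
      ∑ p ∈ A ×ˢ A, ∑ r ∈ A ×ˢ A, ψ (p.1 - p.2 + (r.1 - r.2) + x) := by
    rw [show ‖∑ a ∈ A, ψ a‖ ^ 4 = ‖∑ a ∈ A, ψ a‖ ^ 2 * ‖∑ a ∈ A, ψ a‖ ^ 2 by ring,
      Complex.ofReal_mul, sq_norm_sum_addChar_eq, Finset.sum_mul_sum, Finset.sum_mul]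
    simp_rw [Finset.sum_mul, AddChar.map_add_eq_mul]
  have hzero : ∑ ψ : AddChar G ℂ, ((‖∑ a ∈ A, ψ a‖ ^ 4 : ℝ) : ℂ) * ψ x = 0 := by
    simp_rw [hterm]
    rw [Finset.sum_comm]
    refine Finset.sum_eq_zero fun p hp ↦ ?_
    rw [Finset.sum_comm]
    refine Finset.sum_eq_zero fun r hr ↦ ?_
    rw [AddChar.sum_apply_eq_zero_iff_ne_zero]
    intro h
    rw [Finset.mem_product] at hp hr
    have hx' : x = p.2 - p.1 + (r.2 - r.1) := by rw [eq_neg_of_add_eq_zero_right h]; abel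
    exact hx (hx' ▸ Finset.add_mem_add (Finset.sub_mem_sub hp.2 hp.1)
      (Finset.sub_mem_sub hr.2 hr.1))
  simpa only [Complex.re_sum, Complex.re_ofReal_mul, Complex.zero_re] using
    congrArg Complex.re hzero

open Classical in
/-- The large spectrum of `A`: the characters at which the Fourier transform of the indicator
function of `A` is large. The threshold `|A|³ / (2|G|)` for its squared modulus is the one of
Bogolyubov's argument. -/
noncomputable def largeSpectrum (A : Finset G) : Finset (AddChar G ℂ) :=
  {ψ | (A.card : ℝ) ^ 3 ≤ 2 * Nat.card G * ‖∑ a ∈ A, ψ a‖ ^ 2}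

theorem mem_largeSpectrum {A : Finset G} {ψ : AddChar G ℂ} :
    ψ ∈ largeSpectrum A ↔ (A.card : ℝ) ^ 3 ≤ 2 * Nat.card G * ‖∑ a ∈ A, ψ a‖ ^ 2 := by
  simp [largeSpectrum]

theorem card_largeSpectrum_mul_sq_card_le {A : Finset G} (hA : A.Nonempty) :
    (largeSpectrum A).card * A.card ^ 2 ≤ 2 * Nat.card G ^ 2 := by
  have hcard : (0 : ℝ) < A.card := by exact_mod_cast hA.card_pos
  have markov : (largeSpectrum A).card * (A.card : ℝ) ^ 3 ≤
      2 * Nat.card G * (Nat.card G * A.card) := by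
    calc (largeSpectrum A).card * (A.card : ℝ) ^ 3
        ≤ ∑ ψ ∈ largeSpectrum A, 2 * Nat.card G * ‖∑ a ∈ A, ψ a‖ ^ 2 := by
          rw [← nsmul_eq_mul]
          exact Finset.card_nsmul_le_sum _ _ _ fun ψ hψ ↦ mem_largeSpectrum.1 hψ
      _ ≤ ∑ ψ : AddChar G ℂ, 2 * Nat.card G * ‖∑ a ∈ A, ψ a‖ ^ 2 :=
          Finset.sum_le_univ_sum_of_nonneg fun ψ ↦ by positivity
      _ = 2 * Nat.card G * (Nat.card G * A.card) := by
          rw [← Finset.mul_sum, sum_sq_norm_sum_addChar]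
  have : ((largeSpectrum A).card * A.card ^ 2 : ℝ) ≤ 2 * Nat.card G ^ 2 :=
    le_of_mul_le_mul_right (by linarith) hcard
  exact_mod_cast this

theorem mem_sub_add_sub_of_largeSpectrum [DecidableEq G] {A : Finset G} (hA : A.Nonempty) {x : G}
    (hx : ∀ ψ ∈ largeSpectrum A, 0 ≤ (ψ x).re) : x ∈ A - A + (A - A) := by
  by_contra hxA
  have hcard : (0 : ℝ) < A.card := by exact_mod_cast hA.card_pos
  have hG : (0 : ℝ) < Nat.card G := by exact_mod_cast Nat.card_pos
  set c : ℝ := A.card ^ 3 / (2 * Nat.card G) with hc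
  set P : AddChar G ℂ → ℝ := fun ψ ↦ ‖∑ a ∈ A, ψ a‖ ^ 2
  have hterm (ψ : AddChar G ℂ) : 0 ≤ P ψ ^ 2 * (ψ x).re + c * P ψ := by
    have hP : 0 ≤ P ψ := by positivity
    by_cases hψ : ψ ∈ largeSpectrum A
    · have := hx ψ hψ
      positivity
    · have hPc : P ψ ≤ c := by
        rw [hc, le_div_iff₀' (by positivity)]
        exact (not_le.1 (mt mem_largeSpectrum.2 hψ)).le
      have hre : -1 ≤ (ψ x).re := by
        simpa using neg_le_of_abs_le (Complex.abs_re_le_norm (ψ x))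
      nlinarith [mul_nonneg hP (sub_nonneg.2 hPc), sq_nonneg (P ψ)]
  have hsum : ∑ ψ, (P ψ ^ 2 * (ψ x).re + c * P ψ) = (A.card : ℝ) ^ 4 / 2 := by
    have hfour := sum_pow_four_norm_sum_addChar_mul_re_eq_zero hxA
    simp_rw [P, Finset.sum_add_distrib, ← Finset.mul_sum, sum_sq_norm_sum_addChar, ← pow_mul]
    rw [hfour, hc]
    field_simp
    ring
  have htrivial := Finset.single_le_sum (fun ψ _ ↦ hterm ψ) (Finset.mem_univ 0)
  have hP₀ : P 0 = (A.card : ℝ) ^ 2 := by simp [P]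
  rw [hsum, hP₀, AddChar.zero_apply, Complex.one_re] at htrivial
  have : 0 < c * A.card ^ 2 := by positivity
  nlinarith [pow_pos hcard 4]

theorem exists_addChar_forall_mem_sub_add_sub [DecidableEq G] {A : Finset G} (hA : A.Nonempty)
    {K : ℕ} (hK : 2 * Nat.card G ^ 2 ≤ K * A.card ^ 2) :
    ∃ ψ : Fin K → AddChar G ℂ, ∀ x, (∀ i, 0 ≤ (ψ i x).re) → x ∈ A - A + (A - A) := by
  have hcard : Fintype.card (largeSpectrum A) ≤ Fintype.card (Fin K) := by
    rw [Fintype.card_coe, Fintype.card_fin]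
    exact Nat.le_of_mul_le_mul_right ((card_largeSpectrum_mul_sq_card_le hA).trans hK)
      (pow_pos hA.card_pos 2)
  obtain ⟨e⟩ := Function.Embedding.nonempty_of_card_le hcard
  refine ⟨Function.extend e Subtype.val 0, fun x hx ↦
    mem_sub_add_sub_of_largeSpectrum hA fun ψ hψ ↦ ?_⟩
  simpa [e.injective.extend_apply] using hx (e ⟨ψ, hψ⟩)

end Bogolyubov

section Syndetic

open scoped Pointwise

variable {A : Set ℤ} {L : ℕ}

theorem exists_finset_subset_inter_Ico_card_eq (hA : ∀ x : ℤ, ∃ a ∈ A, a ∈ Set.Ico x (x + L))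
    (M : ℕ) : ∃ B : Finset ℤ, ↑B ⊆ A ∩ Set.Ico 0 ↑(L * M) ∧ B.card = M := by
  choose g hgA hg using hA
  have hmono : StrictMono fun k : ℕ ↦ g (L * k) := strictMono_nat_of_lt_succ fun k ↦
    (hg (L * k)).2.trans_le (by simpa only [Nat.cast_add_one, mul_add_one] using
      (hg (L * (k + 1 : ℕ))).1)
  refine ⟨(Finset.range M).image fun k : ℕ ↦ g (L * k), ?_, ?_⟩
  · intro a ha
    obtain ⟨k, hk, rfl⟩ := Finset.mem_image.1 (Finset.mem_coe.1 ha)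
    refine ⟨hgA _, (by positivity : (0 : ℤ) ≤ L * k).trans (hg _).1, (hg _).2.trans_le ?_⟩
    exact_mod_cast Nat.mul_le_mul_left L (Finset.mem_range.1 hk)
  · rw [Finset.card_image_of_injective _ hmono.injective, Finset.card_range]

theorem mem_sub_add_sub_of_intCast_mem {B : Finset ℤ} {m q : ℕ} (hB : (B : Set ℤ) ⊆ Set.Ico 0 m)
    (hq : 3 * m ≤ q) {x : ℤ} (hx : |x| ≤ m)
    (hxB : (x : ZMod q) ∈ B.image ((↑) : ℤ → ZMod q) - B.image (↑) +
      (B.image (↑) - B.image (↑))) : x ∈ B - B + (B - B) := by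
  obtain ⟨u, hu, huq⟩ : ∃ u ∈ B - B + (B - B), (u : ZMod q) = x := by
    have hsub : (B - B).image ((↑) : ℤ → ZMod q) = B.image (↑) - B.image (↑) :=
      Finset.image_image₂_distrib Int.cast_sub
    have hadd : (B - B + (B - B)).image ((↑) : ℤ → ZMod q) =
        (B - B).image (↑) + (B - B).image (↑) := Finset.image_image₂_distrib Int.cast_add
    rwa [← hsub, ← hadd, Finset.mem_image] at hxB
  suffices x = u from this ▸ hu
  obtain ⟨_, hab, _, hcd, rfl⟩ := Finset.mem_add.1 hu
  obtain ⟨a, ha, b, hb, rfl⟩ := Finset.mem_sub.1 hab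
  obtain ⟨c, hc, d, hd, rfl⟩ := Finset.mem_sub.1 hcd
  have := hB ha
  have := hB hb
  have := hB hc
  have := hB hd
  refine sub_eq_zero.1 (Int.eq_zero_of_abs_lt_dvd
    ((ZMod.intCast_eq_intCast_iff_dvd_sub _ _ _).1 huq) ?_)
  simp only [Set.mem_Ico] at *
  grind

theorem exists_circle_forall_abs_le_mem_sub_add_sub
    (hA : ∀ x : ℤ, ∃ a ∈ A, a ∈ Set.Ico x (x + L)) (M : ℕ) :
    ∃ z : Fin (18 * L ^ 2) → Circle, ∀ x : ℤ, |x| ≤ M →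
      (∀ i, 0 < ((z i ^ x : Circle) : ℂ).re) → x ∈ A - A + (A - A) := by
  obtain ⟨a, ha, ha₀⟩ := hA 0
  obtain rfl | hM := M.eq_zero_or_pos
  · refine ⟨1, fun x hx _ ↦ ?_⟩
    obtain rfl : x = 0 := by simpa using hx
    exact ⟨_, Set.sub_mem_sub ha ha, _, Set.sub_mem_sub ha ha, by simp⟩
  have hL : 0 < L := by simpa using ha₀.1.trans_lt ha₀.2
  -- Modulo `3 * L * M`, no wrap-around occurs for `|x| ≤ M` and four terms from `[0, L * M)`; the
  -- number of characters is then `2 * (3 * L * M) ^ 2 / M ^ 2`.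
  have : NeZero (3 * (L * M)) := ⟨by positivity⟩
  obtain ⟨B, hBA, hBcard⟩ := exists_finset_subset_inter_Ico_card_eq hA M
  obtain ⟨hBA, hBm⟩ := Set.subset_inter_iff.1 hBA
  set B' : Finset (ZMod (3 * (L * M))) := B.image (↑)
  have hB'card : B'.card = M := by
    rw [Finset.card_image_of_injOn, hBcard]
    intro b hb c hc h
    have := hBm hb
    have := hBm hc
    refine (sub_eq_zero.1 (Int.eq_zero_of_abs_lt_dvd
      ((ZMod.intCast_eq_intCast_iff_dvd_sub _ _ _).1 h) ?_)).symm
    simp only [Set.mem_Ico] at *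
    grind
  have hB' : B'.Nonempty := Finset.card_pos.1 (hB'card.symm ▸ hM)
  obtain ⟨ψ, hψ⟩ := exists_addChar_forall_mem_sub_add_sub (K := 18 * L ^ 2) hB'
    (by rw [Nat.card_zmod, hB'card]; exact le_of_eq (by ring))
  refine ⟨fun i ↦ AddChar.circleEquivComplex.symm (ψ i) 1, fun x hx hxψ ↦ ?_⟩
  have hxB : x ∈ B - B + (B - B) := by
    refine mem_sub_add_sub_of_intCast_mem hBm le_rfl
      (hx.trans (by exact_mod_cast Nat.le_mul_of_pos_left M hL)) (hψ x fun i ↦ ?_)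
    have := (hxψ i).le
    rwa [← AddChar.map_zsmul_eq_zpow, zsmul_one] at this
  have := Finset.mem_coe.2 hxB
  push_cast at this
  exact Set.add_subset_add (Set.sub_subset_sub hBA hBA) (Set.sub_subset_sub hBA hBA) this

theorem exists_circle_forall_mem_sub_add_sub (hA : ∀ x : ℤ, ∃ a ∈ A, a ∈ Set.Ico x (x + L)) :
    ∃ (K : ℕ) (z : Fin K → Circle), ∀ x : ℤ,
      (∀ i, 0 < ((z i ^ x : Circle) : ℂ).re) → x ∈ A - A + (A - A) := by
  set admissible : ℤ → Set (Fin (18 * L ^ 2) → Circle) := fun x ↦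
    {z | (∀ i, 0 < ((z i ^ x : Circle) : ℂ).re) → x ∈ A - A + (A - A)}
  have hclosed (x : ℤ) : IsClosed (admissible x) := by
    refine isClosed_imp ?_ isClosed_const
    rw [Set.ofPred_forall]
    exact isOpen_iInter_of_finite fun i ↦ isOpen_lt continuous_const
      ((Complex.continuous_re.comp continuous_subtype_val).comp'
        ((continuous_zpow (G := Circle) x).comp (continuous_apply i)))
  have hfinite (u : Finset ℤ) : (Set.univ ∩ ⋂ x ∈ u, admissible x).Nonempty := by
    obtain ⟨z, hz⟩ := exists_circle_forall_abs_le_mem_sub_add_sub hA (u.sup Int.natAbs)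
    refine ⟨z, Set.mem_univ z, Set.mem_iInter₂.2 fun x hx ↦ hz x ?_⟩
    rw [Int.abs_eq_natAbs]
    exact_mod_cast Finset.le_sup (f := Int.natAbs) hx
  obtain ⟨z, -, hz⟩ := isCompact_univ.inter_iInter_nonempty admissible hclosed hfinite
  exact ⟨_, z, Set.mem_iInter.1 hz⟩

end Syndetic

section Bohr

open scoped Pointwise

theorem norm_coe_addCircle_le_iff {x δ : ℝ} :
    ‖(x : AddCircle (2 * π))‖ ≤ δ ↔ ∃ m : ℤ, |x - 2 * π * m| ≤ δ := by
  constructor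
  · intro h
    rw [AddCircle.norm_eq] at h
    exact ⟨_, by rwa [mul_comm]⟩
  · rintro ⟨m, hm⟩
    refine le_trans ?_ hm
    have : ((x - 2 * π * m : ℝ) : AddCircle (2 * π)) = x := by
      rw [AddCircle.coe_sub, mul_comm _ (m : ℝ), ← zsmul_eq_mul, AddCircle.coe_zsmul,
        AddCircle.coe_period, zsmul_zero, sub_zero]
    exact this ▸ QuotientAddGroup.norm_mk_le_norm

theorem cos_pos_of_norm_coe_addCircle_le {x : ℝ} (hx : ‖(x : AddCircle (2 * π))‖ ≤ 3 / 2) :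
    0 < cos x := by
  obtain ⟨m, hm⟩ := norm_coe_addCircle_le_iff.1 hx
  rw [← cos_sub_int_mul_two_pi x m, mul_comm]
  have := pi_gt_three
  obtain ⟨h₁, h₂⟩ := abs_le.1 hm
  exact cos_pos_of_mem_Ioo ⟨by linarith, by linarith⟩

/-- The set of `x : ℝ` such that `θ * x` is `δ`-close to `2πℤ` for all frequencies `θ ∈ Λ`. -/
def bohrSet (Λ : Set ℝ) (δ : ℝ) : Set ℝ :=
  {x | ∀ θ ∈ Λ, ‖((θ * x : ℝ) : AddCircle (2 * π))‖ ≤ δ}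

/-- The homomorphism from `ℝ` to its Bohr compactification, which we realise inside the product
of circles indexed by all frequencies `θ : ℝ`. -/
noncomputable def bohrMap : ℝ →+ (ℝ → AddCircle (2 * π)) where
  toFun x θ := (θ * x : ℝ)
  map_zero' := by ext; simp
  map_add' x y := by ext; simp [mul_add]

/-- The filter of neighbourhoods of `0` in the Bohr topology of `ℝ`. -/
noncomputable def bohrNhds : Filter ℝ := comap bohrMap (𝓝 0)

theorem hasBasis_bohrNhds :
    bohrNhds.HasBasis (fun p : Set ℝ × ℝ ↦ p.1.Finite ∧ 0 < p.2) fun p ↦ bohrSet p.1 p.2 := by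
  have hbasis := ((Metric.nhds_basis_closedBall (x := (0 : AddCircle (2 * π)))).pi_self
    (ι := ℝ)).comap bohrMap
  rw [← nhds_pi (a := fun _ ↦ 0)] at hbasis
  refine hbasis.congr (fun _ ↦ Iff.rfl) fun p _ ↦ ?_
  ext x
  simp [bohrSet, bohrMap]

theorem tendsto_add_bohrNhds :
    Tendsto (fun p : ℝ × ℝ ↦ p.1 + p.2) (bohrNhds ×ˢ bohrNhds) bohrNhds := by
  have h := (tendsto_comap.comp (tendsto_fst (f := bohrNhds) (g := bohrNhds))).add
    (tendsto_comap.comp tendsto_snd)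
  rw [add_zero] at h
  exact tendsto_comap_iff.2 (h.congr fun p ↦ (map_add bohrMap p.1 p.2).symm)

theorem tendsto_sub_bohrNhds :
    Tendsto (fun p : ℝ × ℝ ↦ p.1 - p.2) (bohrNhds ×ˢ bohrNhds) bohrNhds := by
  have h := (tendsto_comap.comp (tendsto_fst (f := bohrNhds) (g := bohrNhds))).sub
    (tendsto_comap.comp tendsto_snd)
  rw [sub_zero] at h
  exact tendsto_comap_iff.2 (h.congr fun p ↦ (map_sub bohrMap p.1 p.2).symm)

theorem relativelyDenseR_of_mem_bohrNhds {V : Set ℝ} (hV : V ∈ bohrNhds) :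
    RelativelyDenseR V := by
  obtain ⟨U, hU, hUV⟩ := mem_comap.1 hV
  have : Fact (0 < 2 * π) := ⟨two_pi_pos⟩
  have htb : TotallyBounded (Set.range bohrMap) :=
    isCompact_univ.totallyBounded.subset (Set.subset_univ _)
  have hent : {p : (ℝ → AddCircle (2 * π)) × (ℝ → AddCircle (2 * π)) | p.1 - p.2 ∈ U} ∈
      uniformity (ℝ → AddCircle (2 * π)) := by
    rw [uniformity_eq_comap_nhds_zero_swapped]
    exact preimage_mem_comap hU
  obtain ⟨T, hT, hTfin, hcov⟩ := totallyBounded_iff_subset.1 htb _ hent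
  choose! g hg using fun y (hy : y ∈ T) ↦ hT hy
  obtain ⟨C, hC⟩ := (hTfin.image fun y ↦ |g y|).bddAbove
  refine ⟨|C| + 1, by positivity, fun x ↦ ?_⟩
  obtain ⟨y, hy, hxy⟩ := Set.mem_iUnion₂.1 (hcov ⟨x, rfl⟩)
  refine ⟨x - g y, hUV ?_, ?_⟩
  · rwa [Set.mem_preimage, map_sub, hg y hy]
  · have : |g y| ≤ C := hC ⟨y, hy, rfl⟩
    rw [sub_sub_cancel_left, abs_neg]
    linarith [le_abs_self C]

theorem exists_finite_forall_cos_pos_mem_sub_add_sub {A : Set ℤ} {L : ℕ}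
    (hA : ∀ x : ℤ, ∃ a ∈ A, a ∈ Set.Ico x (x + L)) :
    ∃ Λ : Set ℝ, Λ.Finite ∧ (∀ θ ∈ Λ, |θ| ≤ π) ∧
      ∀ m : ℤ, (∀ θ ∈ Λ, 0 < cos (θ * m)) → m ∈ A - A + (A - A) := by
  obtain ⟨K, z, hz⟩ := exists_circle_forall_mem_sub_add_sub hA
  refine ⟨Set.range fun i ↦ (z i : ℂ).arg, Set.finite_range _,
    Set.forall_mem_range.2 fun i ↦ Complex.abs_arg_le_pi _, fun m hm ↦ hz m fun i ↦ ?_⟩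
  have := Set.forall_mem_range.1 hm i
  rw [← Circle.exp_arg (z i), ← Circle.exp_intCast_mul, Circle.coe_exp, Complex.exp_ofReal_mul_I_re]
  rwa [mul_comm]

theorem RelativelyDenseR.exists_forall_floor_mem_Ico {A : Set ℝ} (hA : RelativelyDenseR A) {h : ℝ}
    (hh : 0 < h) :
    ∃ L : ℕ, ∀ x : ℤ, ∃ b ∈ (fun a : ℝ ↦ ⌊a / h⌋) '' A, b ∈ Set.Ico x (x + L) := by
  obtain ⟨l, -, hl⟩ := hA
  have hn := Nat.le_ceil (l / h)
  set n := ⌈l / h⌉₊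
  refine ⟨2 * n + 1, fun x ↦ ?_⟩
  obtain ⟨a, ha, hax⟩ := hl (h * (x + n))
  rw [show a - h * (x + n) = h * (a / h - (x + n)) by field_simp, abs_mul, abs_of_pos hh,
    ← le_div_iff₀' hh] at hax
  obtain ⟨h₁, h₂⟩ := abs_le.1 hax
  refine ⟨_, ⟨a, ha, rfl⟩, Int.le_floor.2 (by linarith), Int.floor_lt.2 ?_⟩
  push_cast
  linarith

theorem abs_mul_sub_le_of_mem_sub_add_sub_image_floor {A : Set ℝ} {h : ℝ} (hh : 0 < h) {m : ℤ}
    (hm : m ∈ (fun a : ℝ ↦ ⌊a / h⌋) '' A - (fun a : ℝ ↦ ⌊a / h⌋) '' A +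
      ((fun a : ℝ ↦ ⌊a / h⌋) '' A - (fun a : ℝ ↦ ⌊a / h⌋) '' A)) :
    ∃ y ∈ A - A + (A - A), |h * m - y| ≤ 2 * h := by
  obtain ⟨_, ⟨_, ⟨a, ha, rfl⟩, _, ⟨b, hb, rfl⟩, rfl⟩, _,
    ⟨_, ⟨c, hc, rfl⟩, _, ⟨d, hd, rfl⟩, rfl⟩, rfl⟩ := hm
  refine ⟨a - b + (c - d), Set.add_mem_add (Set.sub_mem_sub ha hb) (Set.sub_mem_sub hc hd), ?_⟩
  have hfloor (t : ℝ) : h * ⌊t / h⌋ ≤ t ∧ t ≤ h * ⌊t / h⌋ + h := by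
    have h₁ := (le_div_iff₀' hh).1 (Int.floor_le (t / h))
    have h₂ := (div_lt_iff₀' hh).1 (Int.lt_floor_add_one (t / h))
    exact ⟨h₁, by linarith⟩
  rw [abs_le]
  push_cast
  constructor <;> linarith [hfloor a, hfloor b, hfloor c, hfloor d]

theorem RelativelyDenseR.exists_forall_mem_bohrSet_abs_sub_le {A : Set ℝ}
    (hA : RelativelyDenseR A) {h : ℝ} (hh : 0 < h) : ∃ Λ : Set ℝ, Λ.Finite ∧
      ∀ x ∈ bohrSet Λ 1, ∃ y ∈ A - A + (A - A), |x - y| ≤ 3 * h := by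
  obtain ⟨L, hL⟩ := hA.exists_forall_floor_mem_Ico hh
  obtain ⟨Θ, hΘ, hΘπ, hcos⟩ := exists_finite_forall_cos_pos_mem_sub_add_sub hL
  refine ⟨insert (2 * π / h) ((· / h) '' Θ), (hΘ.image _).insert _, fun x hx ↦ ?_⟩
  obtain ⟨hx₀, hxΘ⟩ := Set.forall_mem_insert.1 hx
  obtain ⟨m, hm⟩ := norm_coe_addCircle_le_iff.1 hx₀
  rw [show 2 * π / h * x - 2 * π * m = 2 * π * (x / h - m) by ring, abs_mul,
    abs_of_pos two_pi_pos] at hm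
  have hmA := hcos m fun θ hθ ↦ by
    refine cos_pos_of_norm_coe_addCircle_le ?_
    have hθx := Set.forall_mem_image.1 hxΘ hθ
    have herror : |θ * (x / h - m)| ≤ 1 / 2 := by
      rw [abs_mul]
      nlinarith [hΘπ θ hθ, abs_nonneg (x / h - m)]
    calc ‖((θ * m : ℝ) : AddCircle (2 * π))‖
        = ‖((θ / h * x : ℝ) : AddCircle (2 * π)) - (θ * (x / h - m) : ℝ)‖ := by
          rw [← AddCircle.coe_sub]
          congr 2
          ring
      _ ≤ 1 + 1 / 2 :=
          (norm_sub_le _ _).trans (add_le_add hθx (QuotientAddGroup.norm_mk_le_norm.trans herror))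
      _ = 3 / 2 := by norm_num
  obtain ⟨y, hy, hmy⟩ := abs_mul_sub_le_of_mem_sub_add_sub_image_floor hh hmA
  refine ⟨y, hy, ?_⟩
  have hxhm : |x - h * m| ≤ h := by
    rw [show x - h * m = h * (x / h - m) by field_simp, abs_mul, abs_of_pos hh]
    nlinarith [pi_gt_three, abs_nonneg (x / h - m)]
  linarith [abs_sub_le x (h * m) y]

theorem tendsto_bohrNhds_of_relativelyDenseR {G : Type*} [AddCommGroup G] [TopologicalSpace G]
    [IsTopologicalAddGroup G] {φ : ℝ →+ G} (hφ : Continuous φ)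
    (hA : ∀ U ∈ 𝓝 (0 : G), ∃ A, RelativelyDenseR A ∧ ∀ a ∈ A, ∀ b ∈ A, φ (a - b) ∈ U) :
    Tendsto φ bohrNhds (𝓝 0) := by
  intro U hU
  obtain ⟨V, hV, hVU⟩ := exists_nhds_zero_half hU
  obtain ⟨W, hW, hWV⟩ := exists_nhds_zero_half hV
  have hWV' : W ⊆ V := fun w hw ↦ by simpa using hWV w hw 0 (mem_of_mem_nhds hW)
  obtain ⟨A, hA, hAW⟩ := hA W hW
  obtain ⟨h, hh, hball⟩ := Metric.nhds_basis_closedBall.mem_iff.1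
    ((hφ.tendsto' 0 0 (map_zero φ)) hW)
  obtain ⟨Λ, hΛ, hΛA⟩ := hA.exists_forall_mem_bohrSet_abs_sub_le (h := h / 3) (by positivity)
  refine hasBasis_bohrNhds.mem_iff.2 ⟨(Λ, 1), ⟨hΛ, one_pos⟩, fun x hx ↦ ?_⟩
  obtain ⟨_, ⟨_, ⟨a, ha, b, hb, rfl⟩, _, ⟨c, hc, d, hd, rfl⟩, rfl⟩, hy⟩ := hΛA x hx
  have hxy : φ (x - (a - b + (c - d))) ∈ W := by
    refine hball ?_
    rw [mem_closedBall_zero_iff]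
    exact hy.trans_eq (by ring)
  have := hVU _ (hWV' hxy) _ (hWV _ (hAW a ha b hb) _ (hAW c hc d hd))
  rwa [← map_add, ← map_add, sub_add_cancel] at this

end Bohr

section Semitopological

open scoped Pointwise

theorem exists_interior_nonempty_of_finite_iUnion {ι Y : Type*} [TopologicalSpace Y] [Nonempty Y]
    {s : Set ι} (hs : s.Finite) {f : ι → Set Y} (hf : ∀ i ∈ s, IsClosed (f i))
    (hcover : ⋃ i ∈ s, f i = Set.univ) : ∃ i ∈ s, (interior (f i)).Nonempty := by
  by_contra! h
  have (t : Set ι) (ht : t.Finite) (hts : t ⊆ s) : interior (⋃ i ∈ t, f i) = ∅ := by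
    induction t, ht using Set.Finite.induction_on with
    | empty => simp
    | @insert i t _ _ ih =>
      rw [Set.insert_subset_iff] at hts
      rw [Set.biUnion_insert, interior_union_isClosed_of_interior_empty (hf i hts.1) (ih hts.2)]
      exact h i hts.1
  simpa [hcover] using this s hs subset_rfl

variable {G : Type*} [AddCommGroup G] [TopologicalSpace G] [SeparatelyContinuousAdd G]

theorem interior_closure_nonempty_of_finite_add_eq_univ {C E : Set G} (hC : C.Finite)
    (hCE : C + E = Set.univ) : (interior (closure E)).Nonempty := by
  have hcover : ⋃ c ∈ C, Homeomorph.addLeft c '' closure E = Set.univ := by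
    refine Set.eq_univ_of_univ_subset (hCE ▸ ?_)
    rintro _ ⟨c, hc, e, he, rfl⟩
    exact Set.mem_biUnion hc ⟨e, subset_closure he, rfl⟩
  obtain ⟨c, -, hc⟩ := exists_interior_nonempty_of_finite_iUnion hC
    (fun c _ ↦ (Homeomorph.addLeft c).isClosedMap _ isClosed_closure) hcover
  rwa [← Homeomorph.image_interior, Set.image_nonempty] at hc

variable [ContinuousNeg G]

theorem closure_sub_closure_subset {E V : Set G} (hV : IsClosed V) (hE : E - E ⊆ V) :
    closure E - closure E ⊆ V := by
  have hright (b : G) (hb : b ∈ E) : closure E ⊆ (· - b) ⁻¹' V :=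
    closure_minimal (fun a ha ↦ hE (Set.sub_mem_sub ha hb))
      (hV.preimage (by simpa only [sub_eq_add_neg] using continuous_add_const (-b)))
  rintro _ ⟨a, ha, b, hb, rfl⟩
  have hleft : closure E ⊆ (a - ·) ⁻¹' V :=
    closure_minimal (fun b hb ↦ hright b hb ha)
      (hV.preimage (by
        simpa only [sub_eq_add_neg] using! (continuous_const_add a).comp continuous_neg))
  exact hleft hb

theorem isTopologicalAddGroup_of_exists_sub_subset [RegularSpace G]
    (h : ∀ U ∈ 𝓝 (0 : G), ∃ E : Set G, E - E ⊆ U ∧ ∃ C : Set G, C.Finite ∧ C + E = Set.univ) :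
    IsTopologicalAddGroup G := by
  refine .of_comm_of_nhds_zero ?_ (continuous_neg.tendsto' 0 0 neg_zero)
    fun x ↦ by simpa using ((Homeomorph.addLeft x).map_nhds_eq 0).symm
  intro U hU
  obtain ⟨V, ⟨hV, hVclosed⟩, hVU⟩ := (closed_nhds_basis (0 : G)).mem_iff.1 hU
  obtain ⟨E, hEV, C, hC, hCE⟩ := h V hV
  obtain ⟨x, hx⟩ := interior_closure_nonempty_of_finite_add_eq_univ hC hCE
  have hadd : ∀ᶠ u in 𝓝 (0 : G), x + u ∈ closure E :=
    (continuous_const_add x).tendsto' 0 x (add_zero x) (mem_interior_iff_mem_nhds.1 hx)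
  have hsub : ∀ᶠ v in 𝓝 (0 : G), x + -v ∈ closure E :=
    continuous_neg.tendsto' 0 0 neg_zero hadd
  refine (hadd.prod_mk hsub).mono fun p hp ↦ ?_
  have := hVU (closure_sub_closure_subset hVclosed hEV (Set.sub_mem_sub hp.1 hp.2))
  rwa [show x + p.1 - (x + -p.2) = p.1 + p.2 by abel] at this

end Semitopological

section Translation

open scoped Pointwise

variable {H X : Type*} [AddCommGroup H] [TopologicalSpace H] [IsTopologicalAddGroup H]
  [TopologicalSpace X]

/-- The translation `t ↦ t + τ` as a continuous map. -/
def shift (τ : H) : C(H, H) := ⟨(· + τ), continuous_add_const τ⟩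

theorem shift_comp_shift (σ τ : H) : (shift σ).comp (shift τ) = shift (σ + τ) := by
  ext t
  simp [shift, add_assoc, add_comm τ]

theorem continuous_shift : Continuous (shift : H → C(H, H)) :=
  ContinuousMap.continuous_of_continuous_uncurry _ (continuous_snd.add continuous_fst)

/-- The group `H` with the coarsest topology for which `τ ↦ F (· + τ)` and `τ ↦ F (· - τ)` are
continuous, where `C(H, X)` carries the compact-open topology. -/
@[nolint unusedArguments]
def TranslationGroup (_ : C(H, X)) : Type _ := H

namespace TranslationGroup

variable {F : C(H, X)}

instance : AddCommGroup (TranslationGroup F) := inferInstanceAs (AddCommGroup H)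

variable (F) in
/-- The identity map from `H` to `H` with its translation topology. -/
def of : H ≃+ TranslationGroup F := AddEquiv.refl H

variable (F) in
/-- The pair of translates of `F` by `τ` and by `-τ`. -/
def translates (τ : TranslationGroup F) : C(H, X) × C(H, X) :=
  (F.comp (shift ((of F).symm τ)), F.comp (shift (-(of F).symm τ)))

instance : TopologicalSpace (TranslationGroup F) := .induced (translates F) inferInstance

theorem isInducing_translates : IsInducing (translates F) := ⟨rfl⟩

theorem translates_neg (τ : TranslationGroup F) : translates F (-τ) = (translates F τ).swap := by
  simp [translates]

theorem translates_add_of (τ : TranslationGroup F) (u : H) :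
    translates F (τ + of F u) =
      ((translates F τ).1.comp (shift u), (translates F τ).2.comp (shift (-u))) := by
  simp [translates, ContinuousMap.comp_assoc, shift_comp_shift, add_comm]

instance [RegularSpace X] : RegularSpace (TranslationGroup F) :=
  isInducing_translates.regularSpace

instance : ContinuousNeg (TranslationGroup F) where
  continuous_neg := isInducing_translates.continuous_iff.2 <|
    (continuous_swap.comp isInducing_translates.continuous).congr fun τ ↦ (translates_neg τ).symm

theorem continuous_add_of [LocallyCompactSpace H] :
    Continuous fun p : TranslationGroup F × H ↦ p.1 + of F p.2 := by
  have htranslates := (isInducing_translates (F := F)).continuous.comp (continuous_fst (Y := H))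
  have hshift := continuous_shift.comp (continuous_snd (X := TranslationGroup F) (Y := H))
  refine isInducing_translates.continuous_iff.2 (Continuous.congr ?_
    fun p ↦ (translates_add_of p.1 p.2).symm)
  exact (ContinuousMap.continuous_comp'.comp (hshift.prodMk htranslates.fst)).prodMk
    (ContinuousMap.continuous_comp'.comp
      ((continuous_shift.comp continuous_snd.neg).prodMk htranslates.snd))

theorem continuous_of [LocallyCompactSpace H] : Continuous (of F) := by
  simpa [Function.comp_def] using
    continuous_add_of.comp (Continuous.prodMk_right (0 : TranslationGroup F))

instance : SeparatelyContinuousAdd (TranslationGroup F) := by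
  have hadd (u : H) : Continuous fun τ : TranslationGroup F ↦ τ + of F u :=
    isInducing_translates.continuous_iff.2 <|
      (((ContinuousMap.continuous_precomp (shift u)).prodMap
        (ContinuousMap.continuous_precomp (shift (-u)))).comp
          isInducing_translates.continuous).congr fun τ ↦ (translates_add_of τ u).symm
  exact ⟨fun {τ} ↦ by simpa [add_comm] using hadd ((of F).symm τ), fun {τ} ↦ hadd ((of F).symm τ)⟩

theorem isTopologicalAddGroup_of_exists_isCompact [LocallyCompactSpace H] [RegularSpace X]
    (h : ∀ U ∈ 𝓝 (0 : TranslationGroup F), ∃ E : Set (TranslationGroup F), E - E ⊆ U ∧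
      ∃ K : Set H, IsCompact K ∧ of F '' K + E = Set.univ) :
    IsTopologicalAddGroup (TranslationGroup F) := by
  refine isTopologicalAddGroup_of_exists_sub_subset fun U hU ↦ ?_
  have hpre : (fun p : TranslationGroup F × H ↦ p.1 + of F p.2) ⁻¹' U ∈
      𝓝 (0 : TranslationGroup F) ×ˢ 𝓝 (0 : H) := by
    rw [← nhds_prod_eq]
    exact continuous_add_of.tendsto' (0, 0) 0 (by simp) hU
  obtain ⟨V, hV, W, hW, hVWU⟩ := mem_prod_iff.1 hpre
  obtain ⟨E, hEV, K, hK, hKE⟩ := h V hV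
  obtain ⟨D, hD, hDW⟩ := exists_nhds_half_neg hW
  obtain ⟨C, -, hKC⟩ := hK.elim_nhds_subcover (fun c ↦ {x | x - c ∈ D}) fun c _ ↦
    (continuous_sub_right c).tendsto' c 0 (sub_self c) hD
  refine ⟨of F '' D + E, ?_, of F '' C, C.finite_toSet.image _, Set.eq_univ_of_forall fun τ ↦ ?_⟩
  · rintro _ ⟨_, ⟨_, ⟨u, hu, rfl⟩, a, ha, rfl⟩, _, ⟨_, ⟨v, hv, rfl⟩, b, hb, rfl⟩, rfl⟩
    have : a - b + of F (u - v) ∈ U :=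
      hVWU (Set.mk_mem_prod (hEV (Set.sub_mem_sub ha hb)) (hDW u hu v hv))
    rwa [map_sub, add_comm, ← add_sub_add_comm] at this
  · obtain ⟨_, ⟨x, hx, rfl⟩, e, he, rfl⟩ := hKE.ge (Set.mem_univ τ)
    obtain ⟨c, hc, hxc⟩ := Set.mem_iUnion₂.1 (hKC hx)
    refine ⟨of F c, ⟨c, hc, rfl⟩, _, ⟨_, ⟨x - c, hxc, rfl⟩, e, he, rfl⟩, ?_⟩
    dsimp only
    rw [← add_assoc, ← map_add, add_sub_cancel]

end TranslationGroup

end Translation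

section NormedTranslation

variable {H X : Type*} [SeminormedAddCommGroup H] [ProperSpace H] [SeminormedAddCommGroup X]
  (F : C(H, X))

theorem hasBasis_nhds_continuousMap :
    (𝓝 F).HasBasis (fun p : ℝ × ℝ ↦ 0 < p.1 ∧ 0 < p.2)
      fun p ↦ {g | ∀ t, ‖t‖ ≤ p.2 → ‖g t - F t‖ ≤ p.1} := by
  have h : (𝓝 F).HasBasis _ _ := nhds_basis_uniformity
    (Metric.uniformity_basis_dist_le (α := X)).compactConvergenceUniformity (x := F)
  refine h.to_hasBasis ?_ ?_
  · rintro ⟨K, ε⟩ ⟨hK, hε⟩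
    obtain ⟨N, hN, hKN⟩ := hK.isBounded.exists_pos_norm_le
    exact ⟨(ε, N), ⟨hε, hN⟩, fun g hg t ht ↦
      (dist_eq_norm _ _).trans_le (hg t (hKN t ht))⟩
  · rintro ⟨ε, N⟩ ⟨hε, -⟩
    exact ⟨(Metric.closedBall 0 N, ε), ⟨isCompact_closedBall 0 N, hε⟩, fun g hg t ht ↦
      (dist_eq_norm _ _).symm.trans_le (hg t (mem_closedBall_zero_iff.2 ht))⟩

theorem TranslationGroup.hasBasis_nhds_zero :
    (𝓝 (0 : TranslationGroup F)).HasBasis (fun p : ℝ × ℝ ↦ 0 < p.1 ∧ 0 < p.2)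
      fun p ↦ {τ | ∀ t, ‖t‖ ≤ p.2 → ‖F (t + (of F).symm τ) - F t‖ ≤ p.1 ∧
        ‖F (t + -(of F).symm τ) - F t‖ ≤ p.1} := by
  have htranslates : translates F 0 = (F, F) := by
    ext <;> simp [translates, shift]
  have h := ((hasBasis_nhds_continuousMap F).prod_self).comap (translates F)
  rw [← nhds_prod_eq, ← htranslates, ← isInducing_translates.nhds_eq_comap] at h
  refine h.congr (fun _ ↦ Iff.rfl) fun p _ ↦ ?_
  ext τ
  simp [translates, shift, ← forall_and]

end NormedTranslation

section Levitan

variable {n : ℕ} {X : Type*} [NormedAddCommGroup X]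

/-- `F` is Levitan almost periodic with respect to the Bohr topology: `E(ε, N)` contains a Bohr
neighbourhood of `0` in `ℝⁿ`. This is the property through which the two notions of Levitan are
compared. -/
def BohrLevitanAP (F : EuclideanSpace ℝ (Fin n) → X) : Prop :=
  ∀ ε > (0 : ℝ), ∀ N > (0 : ℝ), ∃ V ∈ bohrNhds,
    ∀ τ : EuclideanSpace ℝ (Fin n), (∀ j, τ j ∈ V) → τ ∈ AlmostPeriodSet F ε N

theorem almostPeriodSet_mono (F : EuclideanSpace ℝ (Fin n) → X) {ε ε' N N' : ℝ} (hε : ε ≤ ε')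
    (hN : N' ≤ N) : AlmostPeriodSet F ε N ⊆ AlmostPeriodSet F ε' N' :=
  fun _ hτ t ht ↦ (hτ t (ht.trans hN)).trans hε

theorem LevitanType1.bohrLevitanAP {F : EuclideanSpace ℝ (Fin n) → X} (h : LevitanType1 F) :
    BohrLevitanAP F := by
  intro ε hε N hN
  obtain ⟨lam, h⟩ := h
  obtain ⟨k, δ, hδ, hk⟩ := h N hN ε hε
  have hfin : (⋃ j, lam j '' Set.Iio k).Finite :=
    Set.finite_iUnion fun j ↦ (Set.finite_Iio k).image _
  exact ⟨_, hasBasis_bohrNhds.mem_of_mem (i := (_, δ)) ⟨hfin, hδ⟩, fun τ hτ ↦ hk τ fun l hl j ↦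
    norm_coe_addCircle_le_iff.1 (hτ j _ (Set.mem_iUnion.2 ⟨j, l, hl, rfl⟩))⟩

theorem BohrLevitanAP.levitanType1 {F : EuclideanSpace ℝ (Fin n) → X} (h : BohrLevitanAP F) :
    LevitanType1 F := by
  choose V hV hVF using fun m : ℕ ↦ h (1 / (m + 1)) (by positivity) (m + 1) (by positivity)
  choose p hp hpV using fun m ↦ hasBasis_bohrNhds.mem_iff.1 (hV m)
  have hcount : (insert 0 (⋃ m, (p m).1)).Countable :=
    (Set.countable_iUnion fun m ↦ (hp m).1.countable).insert 0
  obtain ⟨freq, hfreq⟩ := hcount.exists_eq_range (Set.insert_nonempty _ _)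
  refine ⟨fun _ ↦ freq, fun N _ ε hε ↦ ?_⟩
  obtain ⟨m, hm⟩ := exists_nat_ge (max (1 / ε) N)
  have hmε : 1 / (m + 1 : ℝ) ≤ ε :=
    (one_div_le (by positivity) hε).2 (by linarith [(le_max_left _ _).trans hm])
  have hmN : N ≤ m + 1 := by linarith [(le_max_right _ _).trans hm]
  choose! idx hidx using fun θ (hθ : θ ∈ (p m).1) ↦ show θ ∈ Set.range freq from
    hfreq ▸ Set.mem_insert_of_mem _ (Set.mem_iUnion_of_mem m hθ)
  obtain ⟨k, hk⟩ := ((hp m).1.image idx).bddAbove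
  refine ⟨k + 1, (p m).2, (hp m).2, fun τ hτ ↦ almostPeriodSet_mono F hmε hmN
    (hVF m τ fun j ↦ hpV m fun θ hθ ↦ norm_coe_addCircle_le_iff.2 ?_)⟩
  simpa only [hidx θ hθ] using hτ (idx θ) (Nat.lt_succ_of_le (hk ⟨θ, hθ, rfl⟩)) j

theorem relativelyDense_pi {E : Fin n → Set ℝ} (hE : ∀ j, RelativelyDenseR (E j)) :
    RelativelyDense {τ : EuclideanSpace ℝ (Fin n) | ∀ j, τ j ∈ E j} := by
  choose l _ hE using hE
  choose e heE hel using hE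
  refine ⟨√(∑ j, l j ^ 2) + 1, by positivity, fun x ↦
    ⟨WithLp.toLp 2 fun j ↦ e j (x j), fun j ↦ heE j (x j), ?_⟩⟩
  rw [EuclideanSpace.norm_eq]
  exact (Real.sqrt_le_sqrt (Finset.sum_le_sum fun j _ ↦
    pow_le_pow_left₀ (norm_nonneg _) (hel j (x j)) 2)).trans (le_add_of_nonneg_right one_pos.le)

theorem BohrLevitanAP.stronglyLevitanNAP {F : EuclideanSpace ℝ (Fin n) → X}
    (h : BohrLevitanAP F) : StronglyLevitanNAP F := by
  refine ⟨fun ε hε N hN ↦ ?_, fun N hN ε hε ↦ ?_⟩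
  · obtain ⟨V, hV, hVF⟩ := h ε hε N hN
    obtain ⟨l, hl, hlV⟩ := relativelyDense_pi fun _ : Fin n ↦ relativelyDenseR_of_mem_bohrNhds hV
    exact ⟨l, hl, fun x ↦ (hlV x).imp fun τ hτ ↦ ⟨hVF τ hτ.1, hτ.2⟩⟩
  · obtain ⟨V, hV, hVF⟩ := h ε hε N hN
    obtain ⟨W, hW, hWV⟩ := mem_prod_self_iff.1
      ((tendsto_add_bohrNhds.eventually_mem hV).and (tendsto_sub_bohrNhds.eventually_mem hV))
    exact ⟨ε, hε, fun _ ↦ W ∩ V,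
      fun _ ↦ relativelyDenseR_of_mem_bohrNhds (inter_mem hW hV),
      fun τ hτ ↦ hVF τ fun j ↦ (hτ j).2,
      fun a b ha hb ↦ ⟨hVF _ fun j ↦ (hWV (Set.mk_mem_prod (ha j).1 (hb j).1)).1,
        hVF _ fun j ↦ (hWV (Set.mk_mem_prod (ha j).1 (hb j).1)).2⟩⟩

open TranslationGroup

theorem StronglyLevitanNAP.exists_relativelyDenseR_forall_of_sub_mem
    {F : C(EuclideanSpace ℝ (Fin n), X)} (h : StronglyLevitanNAP F) {U : Set (TranslationGroup F)}
    (hU : U ∈ 𝓝 0) :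
    ∃ E : Fin n → Set ℝ, (∀ j, RelativelyDenseR (E j)) ∧
      ∀ a b : EuclideanSpace ℝ (Fin n), (∀ j, a j ∈ E j) → (∀ j, b j ∈ E j) →
        of F (a - b) ∈ U := by
  obtain ⟨⟨ε, N⟩, ⟨hε, hN⟩, hεN⟩ := (hasBasis_nhds_zero F).mem_iff.1 hU
  obtain ⟨_, -, E, hE, -, hdiff⟩ := h.2 N hN ε hε
  refine ⟨E, hE, fun a b ha hb ↦ hεN fun t ht ↦ ⟨(hdiff a b ha hb).2 t ht, ?_⟩⟩
  simpa using (hdiff b a hb ha).2 t ht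

theorem StronglyLevitanNAP.isTopologicalAddGroup {F : C(EuclideanSpace ℝ (Fin n), X)}
    (h : StronglyLevitanNAP F) : IsTopologicalAddGroup (TranslationGroup F) := by
  refine isTopologicalAddGroup_of_exists_isCompact fun U hU ↦ ?_
  obtain ⟨E, hE, hEU⟩ := h.exists_relativelyDenseR_forall_of_sub_mem hU
  obtain ⟨l, -, hl⟩ := relativelyDense_pi hE
  refine ⟨of F '' {τ | ∀ j, τ j ∈ E j}, ?_, Metric.closedBall 0 l, isCompact_closedBall 0 l,
    Set.eq_univ_of_forall fun x ↦ ?_⟩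
  · rintro _ ⟨_, ⟨a, ha, rfl⟩, _, ⟨b, hb, rfl⟩, rfl⟩
    simpa using hEU a b ha hb
  · obtain ⟨τ, hτ, hτx⟩ := hl ((of F).symm x)
    refine ⟨_, ⟨(of F).symm x - τ, ?_, rfl⟩, _, ⟨τ, hτ, rfl⟩, ?_⟩
    · rwa [mem_closedBall_zero_iff, norm_sub_rev]
    · simp

theorem StronglyLevitanNAP.tendsto_of_single {F : C(EuclideanSpace ℝ (Fin n), X)}
    (h : StronglyLevitanNAP F) (j : Fin n) :
    Tendsto (fun x ↦ of F (EuclideanSpace.single j x)) bohrNhds (𝓝 0) := by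
  have := h.isTopologicalAddGroup
  let φ : ℝ →+ TranslationGroup F :=
    .mk' (fun x ↦ of F (EuclideanSpace.single j x)) fun x y ↦ by
      rw [EuclideanSpace.single, PiLp.single_add, map_add]
  have hφ : Continuous φ :=
    continuous_of.comp ((PiLp.continuous_toLp 2 _).comp (continuous_single (A := fun _ ↦ ℝ) j))
  refine tendsto_bohrNhds_of_relativelyDenseR hφ fun U hU ↦ ?_
  obtain ⟨E, hE, hEU⟩ := h.exists_relativelyDenseR_forall_of_sub_mem hU
  have hne (i : Fin n) : (E i).Nonempty := by
    obtain ⟨_, -, hl⟩ := hE i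
    exact (hl 0).imp fun _ ↦ And.left
  choose p hp using hne
  refine ⟨E j, hE j, fun a ha b hb ↦ ?_⟩
  have hupdate {c : ℝ} (hc : c ∈ E j) (i : Fin n) : Function.update p j c i ∈ E i := by
    obtain rfl | hij := eq_or_ne i j <;> simp [*]
  have := hEU (.toLp 2 (Function.update p j a)) (.toLp 2 (Function.update p j b))
    (hupdate ha) (hupdate hb)
  rwa [← WithLp.toLp_sub, ← Function.update_sub, sub_self] at this

theorem StronglyLevitanNAP.bohrLevitanAP {F : C(EuclideanSpace ℝ (Fin n), X)}
    (h : StronglyLevitanNAP F) : BohrLevitanAP F := by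
  intro ε hε N hN
  have := h.isTopologicalAddGroup
  have hsum : Tendsto (fun τ : Fin n → ℝ ↦ of F (WithLp.toLp 2 τ)) (Filter.pi fun _ ↦ bohrNhds)
      (𝓝 0) := by
    have hlim := tendsto_finsetSum Finset.univ fun j _ ↦
      (h.tendsto_of_single j).comp (tendsto_eval_pi (fun _ : Fin n ↦ bohrNhds) j)
    rw [Finset.sum_const_zero] at hlim
    have hdecomp (τ : Fin n → ℝ) : ∑ j, EuclideanSpace.single j (τ j) = WithLp.toLp 2 τ := by
      ext i
      simp
    exact hlim.congr fun τ ↦ by simp only [Function.comp_apply, ← map_sum, hdecomp]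
  have hmem := hsum ((hasBasis_nhds_zero F).mem_of_mem (i := (ε, N)) ⟨hε, hN⟩)
  obtain ⟨⟨I, V⟩, ⟨-, hV⟩, hIV⟩ := (bohrNhds.basis_sets.pi_self).mem_iff.1 hmem
  exact ⟨V, hV, fun τ hτ t ht ↦ (hIV (a := τ.ofLp) (fun j _ ↦ hτ j) t ht).1⟩

theorem stmt8_general (F : EuclideanSpace ℝ (Fin n) → X) (hF : Continuous F) :
    LevitanType1 F ↔ StronglyLevitanNAP F :=
  ⟨fun h ↦ h.bohrLevitanAP.stronglyLevitanNAP,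
    fun h ↦ (StronglyLevitanNAP.bohrLevitanAP (F := ⟨F, hF⟩) h).levitanType1⟩

end Levitan

/-- A continuous `F : ℝⁿ → X` is Levitan `N`-almost periodic of type `1` if and only if
it is strongly Levitan `N`-almost periodic. -/
theorem stmt8 {n : ℕ} {X : Type*} [NormedAddCommGroup X] [NormedSpace ℂ X]
    [CompleteSpace X] (F : EuclideanSpace ℝ (Fin n) → X) (hF : Continuous F) :
    LevitanType1 F ↔ StronglyLevitanNAP F :=
  stmt8_general F hF
end
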